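/- arXiv:2401.06502 — 4 statements merged into one kernel-verified Lean document; each statement's English description precedes it below -/
import Mathlib

section
/- Let S_b be a set of N_s distinct integers and S_c a set of L distinct integers, and let K be a positive integer with K < min(N_s, L+1). Suppose condition (a) holds: for every choice of K+1 distinct angles φ_1,…,φ_{K+1} ∈ [-π/2, π/2), the manifold matrix A_{S_b}(φ) ∈ ℂ^{N_s×(K+1)} has rank K+1; and condition (b) holds: for every choice of K distinct angles ϑ_1,…,ϑ_K ∈ [-π/2, π/2), the manifold matrix A_{S_c}(ϑ) ∈ ℂ^{L×K} has rank K. Then for every choice of K distinct angles θ_1,…,θ_K ∈ [-π/2, π/2) and every x ∈ ℂ^K with all entries nonzero, the spatially smoothed matrix Y = A_{S_b}(θ)·diag(x)·A_{S_c}(θ)^T satisfies: rank(Y) = K, and for every φ ∈ [-π/2, π/2), the steering vector a_{S_b}(φ) lies in the column space of Y if and only if φ ∈ {θ_1,…,θ_K}. -/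
open Matrix

/-- Steering vector of a linear array with sensor positions `d` (in half-wavelength units)
at angle `θ`: entries `exp (i π d_n sin θ)`. -/
noncomputable def steer {N : ℕ} (d : Fin N → ℤ) (θ : ℝ) : Fin N → ℂ :=
  fun n => Complex.exp (Complex.I * (Real.pi : ℂ) * (d n : ℂ) * (Real.sin θ : ℂ))

/-- Array manifold matrix: the `k`-th column is the steering vector at angle `θ k`. -/
noncomputable def manifold {N K : ℕ} (d : Fin N → ℤ) (θ : Fin K → ℝ) :
    Matrix (Fin N) (Fin K) ℂ :=
  Matrix.of fun n k => steer d (θ k) n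

/-- The column space of a matrix, i.e. the range of `x ↦ M *ᵥ x`. -/
noncomputable def colSpace {m n : ℕ} (M : Matrix (Fin m) (Fin n) ℂ) :
    Submodule ℂ (Fin m → ℂ) :=
  LinearMap.range M.mulVecLin

/-- Angles are restricted to `[-π/2, π/2)`. -/
def angleDomain : Set ℝ := Set.Ico (-(Real.pi / 2)) (Real.pi / 2)

/-! With `A = A_{S_b}(θ)`, `D = diag(x)` and `C = A_{S_c}(θ)ᵀ`, condition (b) and `x k ≠ 0` say that
`D * C` has independent rows, hence is surjective, so `Y = A * (D * C)` has the column space of `A`,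
the span of the source steering vectors. Appending any further angle to the sources keeps all
steering vectors independent by condition (a), so no steering vector at another angle lies in that
span. -/

section ColumnSpace

variable {R F m n ι : Type*} [Field F]

theorem rank_eq_card_iff_linearIndependent_col [CommRing R] [Nontrivial R] [Fintype n]
    (M : Matrix m n R) : M.rank = Fintype.card n ↔ LinearIndependent R M.col := by
  rw [linearIndependent_iff_card_eq_finrank_span, M.rank_eq_finrank_span_cols, Set.finrank, eq_comm]

theorem range_mulVecLin_eq_top_of_linearIndependent_row [Finite m] [Fintype n] {M : Matrix m n F}
    (hM : LinearIndependent F M.row) : LinearMap.range M.mulVecLin = ⊤ := by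
  have := Fintype.ofFinite m
  exact Submodule.eq_top_of_finrank_eq
    (hM.rank_matrix.trans (Module.finrank_fintype_fun_eq_card F).symm)

variable [Fintype ι] [DecidableEq ι]

theorem linearIndependent_row_diagonal_mul [CommSemiring R] {x : ι → R} {M : Matrix ι n R}
    (hx : ∀ k, IsUnit (x k)) (hM : LinearIndependent R M.row) :
    LinearIndependent R (diagonal x * M).row := by
  have hrow : (diagonal x * M).row = (fun k => (hx k).unit) • M.row := by
    ext k j
    simp [Units.smul_def]
  rw [hrow]
  exact hM.units_smul _

/-- The noiseless spatially smoothed matrix `Y = ∑ k, x k • u k (w k)ᵀ` of sources with amplitudes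
`x k` whose steering vectors in the two sub-arrays are `u k` and `w k`. Steering vectors are indexed
by sources, so they are the columns of `(of u)ᵀ` and the rows of `of w`. -/
def smoothedMatrix [Semiring R] (u : ι → m → R) (x : ι → R) (w : ι → n → R) : Matrix m n R :=
  (of u)ᵀ * diagonal x * of w

variable [Fintype n] {x : ι → F} {w : ι → n → F}

theorem range_mulVecLin_smoothedMatrix (u : ι → m → F) (hx : ∀ k, x k ≠ 0)
    (hw : LinearIndependent F w) :
    LinearMap.range (smoothedMatrix u x w).mulVecLin = Submodule.span F (Set.range u) := by
  have hsurj : LinearMap.range (diagonal x * of w).mulVecLin = ⊤ :=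
    range_mulVecLin_eq_top_of_linearIndependent_row
      (linearIndependent_row_diagonal_mul (fun k => (hx k).isUnit) hw)
  rw [smoothedMatrix, Matrix.mul_assoc, mulVecLin_mul,
    LinearMap.range_comp_of_range_eq_top _ hsurj, range_mulVecLin, col_transpose]
  rfl

theorem rank_smoothedMatrix {u : ι → m → F} (hu : LinearIndependent F u) (hx : ∀ k, x k ≠ 0)
    (hw : LinearIndependent F w) : (smoothedMatrix u x w).rank = Fintype.card ι := by
  rw [rank, range_mulVecLin_smoothedMatrix u hx hw, finrank_span_eq_card hu]

end ColumnSpace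

section KruskalRank

variable {Θ : Type*} {s : Set Θ} {k : ℕ}

/-- The family `v`, restricted to parameters in `s`, has Kruskal rank at least `k`: its values at
any `k` distinct points of `s` are linearly independent. For the steering vectors of an array this
is the rank condition imposed on its manifold matrices. It holds vacuously if `s` has fewer than `k`
points. -/
def HasKruskalRankGE (R : Type*) {V : Type*} [Semiring R] [AddCommMonoid V] [Module R V]
    (v : Θ → V) (s : Set Θ) (k : ℕ) : Prop :=
  ∀ θ : Fin k → Θ, (∀ i, θ i ∈ s) → Function.Injective θ → LinearIndependent R (v ∘ θ)

theorem exists_mem_notMem_range_of_lt_encard (hs : k < s.encard) (θ : Fin k → Θ) :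
    ∃ φ ∈ s, φ ∉ Set.range θ := by
  by_contra! hsub
  have hle : s.encard ≤ k :=
    calc s.encard ≤ (Set.range θ).encard := Set.encard_le_encard hsub
      _ ≤ (Set.univ : Set (Fin k)).encard := Set.image_univ (f := θ) ▸ Set.encard_image_le θ _
      _ = k := by simp
  exact hle.not_gt hs

namespace HasKruskalRankGE

theorem linearIndependent_finCons {R V : Type*} [Semiring R] [AddCommMonoid V] [Module R V]
    {v : Θ → V} (hv : HasKruskalRankGE R v s (k + 1)) {θ : Fin k → Θ} (hθs : ∀ i, θ i ∈ s)
    (hθ : Function.Injective θ) {φ : Θ} (hφs : φ ∈ s) (hφ : φ ∉ Set.range θ) :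
    LinearIndependent R (Fin.cons (v φ) (v ∘ θ) : Fin (k + 1) → V) := by
  rw [← Fin.comp_cons]
  exact hv _ (Fin.cases hφs hθs) (Fin.cons_injective_iff.2 ⟨hφ, hθ⟩)

theorem of_succ {R V : Type*} [Semiring R] [AddCommMonoid V] [Module R V] {v : Θ → V}
    (hv : HasKruskalRankGE R v s (k + 1)) (hs : k < s.encard) : HasKruskalRankGE R v s k := by
  intro θ hθs hθ
  obtain ⟨φ, hφs, hφ⟩ := exists_mem_notMem_range_of_lt_encard hs θ
  exact (hv.linearIndependent_finCons hθs hθ hφs hφ).comp Fin.succ (Fin.succ_injective k)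

theorem mem_span_iff {F V : Type*} [DivisionRing F] [AddCommGroup V] [Module F V] {v : Θ → V}
    (hv : HasKruskalRankGE F v s (k + 1)) {θ : Fin k → Θ} (hθs : ∀ i, θ i ∈ s)
    (hθ : Function.Injective θ) {φ : Θ} (hφs : φ ∈ s) :
    v φ ∈ Submodule.span F (Set.range (v ∘ θ)) ↔ φ ∈ Set.range θ := by
  constructor
  · intro hmem
    by_contra hφ
    exact (_root_.linearIndependent_finCons.1
      (hv.linearIndependent_finCons hθs hθ hφs hφ)).2 hmem
  · rintro ⟨i, rfl⟩
    exact Submodule.subset_span ⟨i, rfl⟩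

end HasKruskalRankGE

end KruskalRank

theorem stmt_0_general {F Θ m n : Type*} [Field F] [Fintype n] {K : ℕ} {s : Set Θ}
    (hs : K < s.encard) {a : Θ → m → F} (ha : HasKruskalRankGE F a s (K + 1)) {θ : Fin K → Θ}
    (hθs : ∀ k, θ k ∈ s) (hθ : Function.Injective θ) {x : Fin K → F} (hx : ∀ k, x k ≠ 0)
    {w : Fin K → n → F} (hw : LinearIndependent F w) :
    (smoothedMatrix (a ∘ θ) x w).rank = K ∧
      ∀ φ ∈ s, a φ ∈ LinearMap.range (smoothedMatrix (a ∘ θ) x w).mulVecLin ↔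
        φ ∈ Set.range θ := by
  constructor
  · simpa using rank_smoothedMatrix (ha.of_succ hs θ hθs hθ) hx hw
  · intro φ hφ
    rw [range_mulVecLin_smoothedMatrix _ hx hw]
    exact ha.mem_span_iff hθs hθ hφ

theorem rank_manifold_eq_iff {N K : ℕ} (d : Fin N → ℤ) (θ : Fin K → ℝ) :
    (manifold d θ).rank = K ↔ LinearIndependent ℂ (steer d ∘ θ) := by
  have h := rank_eq_card_iff_linearIndependent_col (manifold d θ)
  rwa [Fintype.card_fin] at h

theorem hasKruskalRankGE_steer_iff {N k : ℕ} (d : Fin N → ℤ) (s : Set ℝ) :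
    HasKruskalRankGE ℂ (steer d) s k ↔ ∀ θ : Fin k → ℝ, (∀ i, θ i ∈ s) → Function.Injective θ →
      (manifold d θ).rank = k := by
  simp only [HasKruskalRankGE, rank_manifold_eq_iff]

theorem infinite_angleDomain : angleDomain.Infinite :=
  Set.Ico_infinite (by linarith [Real.pi_pos])

/-- Sufficiency direction of Theorem 1: conditions (a) and (b) imply that the spatially
smoothed matrix `Y` has rank `K` and its column space contains the steering vector
`a_{S_b}(φ)` exactly for `φ ∈ {θ_1, …, θ_K}`. -/
theorem stmt_0 {Ns L K : ℕ} (hKpos : 0 < K) (hKlt : K < min Ns (L + 1))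
    (db : Fin Ns → ℤ) (dc : Fin L → ℤ)
    (hdb : Function.Injective db) (hdc : Function.Injective dc)
    (ha : ∀ φ : Fin (K + 1) → ℝ, (∀ i, φ i ∈ angleDomain) → Function.Injective φ →
      (manifold db φ).rank = K + 1)
    (hb : ∀ ϑ : Fin K → ℝ, (∀ i, ϑ i ∈ angleDomain) → Function.Injective ϑ →
      (manifold dc ϑ).rank = K) :
    ∀ θ : Fin K → ℝ, (∀ k, θ k ∈ angleDomain) → Function.Injective θ →
    ∀ x : Fin K → ℂ, (∀ k, x k ≠ 0) →
      (manifold db θ * Matrix.diagonal x * (manifold dc θ)ᵀ).rank = K ∧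
      ∀ φ ∈ angleDomain,
        (steer db φ ∈ colSpace (manifold db θ * Matrix.diagonal x * (manifold dc θ)ᵀ) ↔
          ∃ k, θ k = φ) := by
  intro θ hθs hθ x hx
  exact stmt_0_general (by simp [infinite_angleDomain.encard_eq])
    ((hasKruskalRankGE_steer_iff db _).2 ha) hθs hθ hx
    ((rank_manifold_eq_iff dc θ).1 (hb θ hθs hθ))
end

section
/- Let d_1, d_2 be positive integers with d_1 < d_2 and let D = {0, d_1, d_2}. Then the 3×2 manifold matrix A_D(θ) has rank 2 (full column rank) for every pair of distinct angles θ_1, θ_2 ∈ [-π/2, π/2) if and only if gcd(d_1, d_2) = 1. -/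
open Matrix

/-!
A steering vector depends on its angle only through the class of `sin θ` in `ℝ/2ℤ`, and
`θ ↦ sin θ` identifies `[-π/2, π/2)` with that circle. Two steering vectors are proportional exactly
when all differences of sensor positions annihilate the difference of the two classes, that is, when
its order divides the gcd of those differences. The circle has elements of every prime order, so the
only gcd that excludes all nonzero classes is `1`.
-/

/-- The normalised spatial frequency of a plane wave arriving at angle `θ`: the class of `sin θ`
modulo `2`, on which every steering vector entry `exp (i π d sin θ)`, `d ∈ ℤ`, depends. -/
noncomputable def spatialFreq (θ : ℝ) : AddCircle (2 : ℝ) := (Real.sin θ : ℝ)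

theorem bijOn_sin_angleDomain : Set.BijOn Real.sin angleDomain (Set.Ico (-1) 1) := by
  refine ⟨fun θ hθ ↦ ⟨Real.neg_one_le_sin θ, ?_⟩,
    Real.injOn_sin.mono Set.Ico_subset_Icc_self, fun x hx ↦ ?_⟩
  · rw [← Real.sin_pi_div_two]
    exact Real.sin_lt_sin_of_lt_of_le_pi_div_two hθ.1 le_rfl hθ.2
  · exact ⟨Real.arcsin x, ⟨Real.neg_pi_div_two_le_arcsin x, Real.arcsin_lt_pi_div_two.2 hx.2⟩,
      Real.sin_arcsin hx.1 hx.2.le⟩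

theorem bijOn_addCircle_coe_Ico {𝕜 : Type*} [AddCommGroup 𝕜] [LinearOrder 𝕜]
    [IsOrderedAddMonoid 𝕜] [Archimedean 𝕜] (T a : 𝕜) [Fact (0 < T)] :
    Set.BijOn ((↑) : 𝕜 → AddCircle T) (Set.Ico a (a + T)) Set.univ :=
  ⟨Set.mapsTo_univ _ _, fun _ hx _ hy ↦ (AddCircle.coe_eq_coe_iff_of_mem_Ico hx hy).1,
    (AddCircle.coe_image_Ico_eq T a).superset⟩

theorem bijOn_spatialFreq_angleDomain : Set.BijOn spatialFreq angleDomain Set.univ := by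
  have : Fact ((0 : ℝ) < 2) := ⟨two_pos⟩
  have coe_bijOn := bijOn_addCircle_coe_Ico (2 : ℝ) (-1)
  rw [show (-1 : ℝ) + 2 = 1 by norm_num] at coe_bijOn
  exact coe_bijOn.comp bijOn_sin_angleDomain

theorem steer_apply {N : ℕ} (d : Fin N → ℤ) (θ : ℝ) (n : Fin N) :
    steer d θ n = fourier (d n) (spatialFreq θ) := by
  rw [steer, spatialFreq, fourier_coe_apply]
  congr 1
  push_cast
  ring

theorem exists_mul_fourier_eq_fourier_iff {ι : Type*} {T : ℝ} (hT : T ≠ 0) (d : ι → ℤ) (i₀ : ι)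
    (x y : AddCircle T) :
    (∃ c : ℂ, ∀ i, c * fourier (d i) x = fourier (d i) y) ↔
      ∀ i, (d i - d i₀) • (y - x) = 0 := by
  have mul_eq_iff (c : ℂ) (i : ι) :
      c * fourier (d i) x = fourier (d i) y ↔ c = fourier (d i) (y - x) := by
    have hy : fourier (d i) y = fourier (d i) (y - x) * fourier (d i) x := by
      simp only [fourier_apply, ← Circle.coe_mul, ← AddCircle.toCircle_add, ← smul_add,
        sub_add_cancel]
    rw [hy, fourier_apply (x := x), mul_left_inj' (Circle.coe_ne_zero _)]
  have fourier_eq_iff (i : ι) :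
      fourier (d i) (y - x) = fourier (d i₀) (y - x) ↔ (d i - d i₀) • (y - x) = 0 := by
    rw [fourier_apply, fourier_apply, Circle.coe_inj, (AddCircle.injective_toCircle hT).eq_iff,
      sub_zsmul, ← sub_eq_add_neg, sub_eq_zero]
  simp only [mul_eq_iff, ← fourier_eq_iff]
  exact ⟨fun ⟨c, hc⟩ i ↦ (hc i).symm.trans (hc i₀), fun h ↦ ⟨_, fun i ↦ (h i).symm⟩⟩

theorem forall_zsmul_eq_zero_iff_gcd_zsmul_eq_zero {ι G : Type*} [AddGroup G] (s : Finset ι)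
    (a : ι → ℤ) (z : G) : (∀ i ∈ s, a i • z = 0) ↔ s.gcd a • z = 0 := by
  simp only [← addOrderOf_dvd_iff_zsmul_eq_zero, Finset.dvd_gcd_iff]

theorem forall_addCircle_zsmul_eq_zero_imp_iff_isUnit {𝕜 : Type*} [Field 𝕜]
    [LinearOrder 𝕜] [IsStrictOrderedRing 𝕜] {T : 𝕜} [Fact (0 < T)] (k : ℤ) :
    (∀ z : AddCircle T, k • z = 0 → z = 0) ↔ IsUnit k := by
  refine ⟨fun h ↦ ?_, ?_⟩
  · by_contra hk
    obtain ⟨p, hp, hpk⟩ := Nat.exists_prime_and_dvd (mt Int.isUnit_iff_natAbs_eq.2 hk)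
    have order_eq : addOrderOf ((T / p : 𝕜) : AddCircle T) = p :=
      AddCircle.addOrderOf_period_div hp.pos
    have hz := h (T / p : 𝕜) <| addOrderOf_dvd_iff_zsmul_eq_zero.1 <| by
      rwa [order_eq, Int.natCast_dvd]
    exact hp.ne_one (by rw [← order_eq, hz, addOrderOf_zero])
  · rintro hk z hz
    obtain rfl | rfl := Int.isUnit_iff.1 hk <;> simpa using hz

theorem rank_eq_card_iff_linearIndependent_col_s9 {K m n : Type*} [Field K] [Fintype n]
    (A : Matrix m n K) : A.rank = Fintype.card n ↔ LinearIndependent K A.col := by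
  rw [A.rank_eq_finrank_span_cols, linearIndependent_iff_card_eq_finrank_span, Set.finrank, eq_comm]

theorem rank_manifold_eq_two_iff {N : ℕ} (d : Fin N → ℤ) (i₀ : Fin N) (θ : Fin 2 → ℝ) :
    (manifold d θ).rank = 2 ↔
      (Finset.univ.gcd fun n ↦ d n - d i₀) • (spatialFreq (θ 0) - spatialFreq (θ 1)) ≠ 0 := by
  have steer_ne_zero : steer d (θ 1) ≠ 0 := fun h ↦ Complex.exp_ne_zero _ (congrFun h i₀)
  have rank_iff : (manifold d θ).rank = 2 ↔ ¬∃ c : ℂ, c • steer d (θ 1) = steer d (θ 0) := by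
    have rank_iff_col := rank_eq_card_iff_linearIndependent_col_s9 (manifold d θ)
    rw [Fintype.card_fin, linearIndependent_fin2, ← not_exists] at rank_iff_col
    exact rank_iff_col.trans (and_iff_right steer_ne_zero)
  simp only [rank_iff, funext_iff, Pi.smul_apply, smul_eq_mul, steer_apply]
  rw [exists_mul_fourier_eq_fourier_iff two_ne_zero d i₀, ne_eq,
    ← forall_zsmul_eq_zero_iff_gcd_zsmul_eq_zero]
  simp only [Finset.mem_univ, true_imp_iff]

theorem stmt_9_general {N : ℕ} (d : Fin N → ℤ) (i₀ : Fin N) :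
    (∀ θ : Fin 2 → ℝ, (∀ k, θ k ∈ angleDomain) → Function.Injective θ →
      (manifold d θ).rank = 2) ↔ (Finset.univ.gcd fun n ↦ d n - d i₀) = 1 := by
  have : Fact ((0 : ℝ) < 2) := ⟨two_pos⟩
  have ⟨_, freq_injOn, freq_surjOn⟩ := bijOn_spatialFreq_angleDomain
  rw [← Finset.normalize_gcd, normalize_eq_one,
    ← forall_addCircle_zsmul_eq_zero_imp_iff_isUnit (T := (2 : ℝ))]
  simp only [rank_manifold_eq_two_iff d i₀]
  refine ⟨fun h z hz ↦ ?_, fun h θ hθ θ_inj hz ↦ ?_⟩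
  · by_contra z_ne
    obtain ⟨α, hα, rfl⟩ := freq_surjOn (Set.mem_univ z)
    obtain ⟨β, hβ, freq_β⟩ := freq_surjOn (Set.mem_univ 0)
    have α_ne_β : α ≠ β := by rintro rfl; exact z_ne freq_β
    refine h ![α, β] (Fin.forall_fin_two.2 ⟨hα, hβ⟩) ?_ (by simpa [freq_β] using hz)
    simpa [Function.Injective, Fin.forall_fin_two, eq_comm] using α_ne_β
  · exact zero_ne_one (θ_inj (freq_injOn (hθ 0) (hθ 1) (sub_eq_zero.1 (h _ hz))))

/-- For the array `D = {0, d₁, d₂}` with `0 < d₁ < d₂`, the `3 × 2` manifold matrix has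
full column rank `2` for every pair of distinct angles in `[-π/2, π/2)` if and only if
`d₁` and `d₂` are coprime. -/
theorem stmt_9 (d₁ d₂ : ℕ) (h1 : 0 < d₁) (h12 : d₁ < d₂) :
    (∀ θ : Fin 2 → ℝ, (∀ k, θ k ∈ angleDomain) → Function.Injective θ →
      (manifold ![(0 : ℤ), (d₁ : ℤ), (d₂ : ℤ)] θ).rank = 2) ↔ Nat.gcd d₁ d₂ = 1 := by
  simpa [Fin.univ_succ, ← Int.coe_gcd, Int.normalize_coe_nat] using
    stmt_9_general ![(0 : ℤ), d₁, d₂] 0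
end

section
/- Let S_b = {0, 3, 5, 7} and S_c = {0, 4, 9}. Then for every pair of distinct angles θ_1, θ_2 ∈ [-π/2, π/2) and every x ∈ ℂ^2 with both entries nonzero, the spatially smoothed matrix Y = A_{S_b}(θ)·diag(x)·A_{S_c}(θ)^T ∈ ℂ^{4×3} satisfies: rank(Y) = 2, and for every φ ∈ [-π/2, π/2), the steering vector a_{S_b}(φ) lies in the column space of Y if and only if φ ∈ {θ_1, θ_2}. In particular, spatial smoothing identifies K = 2 targets using sparse sub-arrays S_b and S_c, neither of which contains a ULA segment with unit spacing. -/
open Matrix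

/-!
With the unit `z = exp (i π sin θ)`, the steering vector of `θ` is the vector of powers `z ^ d n`,
and `z` determines `θ`. If the columns of `A_{S_c}(θ)` are independent, then `diag(x) A_{S_c}(θ)ᵀ`
is onto and `Y` has the column space of `A_{S_b}(θ)`, so everything reduces to linear relations
between the power vectors of `S_b`.

Suppose the power vector of `w` is a combination of those of `u ≠ v`. The positions `3, 5, 7` of
`S_b` form a progression of step `2`: applying the coefficients of `(X - u²)(X - v²)` to it shows
that `w²` is `u²` or `v²`. If neither coefficient of the combination vanishes, the three nodes can
be exchanged, so all three squares agree, and two of `u, v, w` are equal because a number has at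
most two square roots. If one vanishes, two power vectors are proportional, so, as `S_b`
contains `0`, `3` and `5`, the quotient `r` of their nodes satisfies `r³ = r⁵ = 1`, whence `r = 1`.
The same coprimality argument with `4` and `9` handles `S_c`.
-/

section ColumnSpace

variable {m n κ F : Type*} [Fintype n] [Field F]

lemma range_mulVecLin_eq_top_of_linearIndependent_row_s12 [Finite κ] {A : Matrix κ n F}
    (hA : LinearIndependent F A.row) : LinearMap.range A.mulVecLin = ⊤ := by
  have := Fintype.ofFinite κ
  apply Submodule.eq_top_of_finrank_eq
  rw [Module.finrank_fintype_fun_eq_card]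
  exact hA.rank_matrix

variable [Fintype κ] [DecidableEq κ]

lemma range_mulVecLin_mul_diagonal_mul_transpose (B : Matrix m κ F) {x : κ → F}
    (hx : ∀ k, x k ≠ 0) {C : Matrix n κ F} (hC : LinearIndependent F C.col) :
    LinearMap.range (B * diagonal x * Cᵀ).mulVecLin = LinearMap.range B.mulVecLin := by
  have hrow : LinearIndependent F (diagonal x * Cᵀ).row := by
    convert hC.units_smul fun k => Units.mk0 (x k) (hx k) using 1
    ext k i
    simp [Units.smul_def]
  rw [Matrix.mul_assoc, mulVecLin_mul, LinearMap.range_comp_of_range_eq_top]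
  exact range_mulVecLin_eq_top_of_linearIndependent_row_s12 hrow

lemma rank_mul_diagonal_mul_transpose {B : Matrix m κ F} (hB : LinearIndependent F B.col)
    {x : κ → F} (hx : ∀ k, x k ≠ 0) {C : Matrix n κ F} (hC : LinearIndependent F C.col) :
    (B * diagonal x * Cᵀ).rank = Fintype.card κ := by
  rw [Matrix.rank, range_mulVecLin_mul_diagonal_mul_transpose B hx hC, range_mulVecLin,
    finrank_span_eq_card hB]

end ColumnSpace

/-- The sensor positions `d` contain a uniform linear array of `n` sensors with spacing `q`, the
first one at `p`. -/
def ContainsULA {ι : Type*} (d : ι → ℤ) (p q : ℤ) (n : ℕ) : Prop :=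
  ∀ j < n, p + q * j ∈ Set.range d

/-- The vector of powers of a node `z` with exponents the sensor positions `d`. This is the steering
vector of an array as a function of its phase; the node is a unit so that negative positions are
allowed. -/
def zpowVec {ι F : Type*} [Monoid F] (d : ι → ℤ) (z : Fˣ) : ι → F :=
  fun i => (z ^ d i : Fˣ)

lemma eq_one_of_zpow_eq_one_of_isCoprime {G : Type*} [Group G] {r : G} {a b : ℤ}
    (hab : IsCoprime a b) (ha : r ^ a = 1) (hb : r ^ b = 1) : r = 1 := by
  have hunit : IsUnit (orderOf r : ℤ) :=
    hab.isUnit_of_dvd' (orderOf_dvd_iff_zpow_eq_one.2 ha) (orderOf_dvd_iff_zpow_eq_one.2 hb)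
  exact orderOf_eq_one_iff.1 (by simpa [Int.isUnit_iff] using hunit)

section PowerVectors

variable {ι F : Type*} [Field F] {d : ι → ℤ}

lemma zpowVec_ne_zero [Nonempty ι] (z : Fˣ) : zpowVec d z ≠ 0 :=
  fun h => Units.ne_zero _ (congrFun h (Classical.arbitrary ι))

lemma eq_of_smul_zpowVec_eq {i j l : ι} (hd : IsCoprime (d j - d i) (d l - d i)) {u v : Fˣ}
    {a : F} (h : a • zpowVec d u = zpowVec d v) : v = u := by
  have hratio : ∀ n, (((v / u) ^ d n : Fˣ) : F) = a := by
    intro n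
    have hn : a * (u ^ d n : Fˣ) = (v ^ d n : Fˣ) := congrFun h n
    rw [div_zpow, Units.val_div_eq_div_val, ← hn, mul_div_cancel_right₀ _ (Units.ne_zero _)]
  have hdiff : ∀ n, (v / u) ^ (d n - d i) = 1 := by
    intro n
    rw [_root_.zpow_sub, mul_inv_eq_one]
    exact Units.ext ((hratio n).trans (hratio i).symm)
  exact div_eq_one.1 (eq_one_of_zpow_eq_one_of_isCoprime hd (hdiff j) (hdiff l))

lemma linearIndependent_zpowVec_pair {i j l : ι} (hd : IsCoprime (d j - d i) (d l - d i))
    {z : Fin 2 → Fˣ} (hz : Function.Injective z) :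
    LinearIndependent F fun k => zpowVec d (z k) := by
  have : Nonempty ι := ⟨i⟩
  rw [← FinVec.etaExpand_eq fun k => zpowVec d (z k)]
  refine (LinearIndependent.pair_iff' (zpowVec_ne_zero _)).2 fun a h => ?_
  exact absurd (hz (eq_of_smul_zpowVec_eq hd h)) (by decide)

open Polynomial in
lemma exists_zpow_eq_of_zpowVec_mem_span {p q : ℤ} {n : ℕ} (hd : ContainsULA d p q n)
    {Z : Finset Fˣ} (hZ : Z.card < n) {w : Fˣ}
    (hw : zpowVec d w ∈ Submodule.span F (zpowVec d '' Z)) : ∃ z ∈ Z, w ^ q = z ^ q := by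
  choose e he using fun j : Fin n => hd j j.isLt
  let P : F[X] := ∏ z ∈ Z, (X - C ((z ^ q : Fˣ) : F))
  let evalULA : (ι → F) →ₗ[F] F := ∑ j : Fin n, P.coeff j • LinearMap.proj (e j)
  have evalULA_zpowVec (z : Fˣ) :
      evalULA (zpowVec d z) = (z ^ p : Fˣ) * P.eval ((z ^ q : Fˣ) : F) := by
    have hdeg : P.natDegree < n := by rwa [natDegree_finsetProd_X_sub_C_eq_card]
    rw [eval_eq_sum_range' hdeg, Finset.sum_range, Finset.mul_sum]
    simp only [evalULA, LinearMap.sum_apply, LinearMap.smul_apply, LinearMap.proj_apply, zpowVec,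
      he, _root_.zpow_add, _root_.zpow_mul, zpow_natCast, Units.val_mul, Units.val_pow_eq_pow_val,
      smul_eq_mul]
    exact Finset.sum_congr rfl fun j _ => mul_left_comm _ _ _
  have hker : Submodule.span F (zpowVec d '' Z) ≤ LinearMap.ker evalULA := by
    rw [Submodule.span_le]
    rintro _ ⟨z, hz, rfl⟩
    have hroot : P.eval ((z ^ q : Fˣ) : F) = 0 := by
      rw [eval_prod]
      exact Finset.prod_eq_zero hz (by simp)
    rw [SetLike.mem_coe, LinearMap.mem_ker, evalULA_zpowVec, hroot, mul_zero]
  have hroot : P.eval ((w ^ q : Fˣ) : F) = 0 := by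
    have := hker hw
    rw [LinearMap.mem_ker, evalULA_zpowVec] at this
    exact (mul_eq_zero.1 this).resolve_left (Units.ne_zero _)
  rw [eval_prod, Finset.prod_eq_zero_iff] at hroot
  obtain ⟨z, hz, h⟩ := hroot
  exact ⟨z, hz, Units.ext (sub_eq_zero.1 (by simpa using h))⟩

lemma sq_eq_or_sq_eq_of_zpowVec_mem_span_pair {p : ℤ} (hd : ContainsULA d p 2 3) {u v w : Fˣ}
    (hw : zpowVec d w ∈ Submodule.span F {zpowVec d u, zpowVec d v}) :
    w ^ 2 = u ^ 2 ∨ w ^ 2 = v ^ 2 := by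
  classical
  obtain ⟨z, hz, h⟩ := exists_zpow_eq_of_zpowVec_mem_span (Z := {u, v}) (w := w) hd
    (Finset.card_le_two.trans_lt (by norm_num)) (by simpa [Set.image_pair] using hw)
  have hsq : w ^ 2 = z ^ 2 := mod_cast h
  rcases Finset.mem_insert.1 hz with rfl | hz
  · exact Or.inl hsq
  · exact Or.inr (Finset.mem_singleton.1 hz ▸ hsq)

lemma ContainsULA.exists_isCoprime_sub {p : ℤ} {n : ℕ} (hd : ContainsULA d p 2 n) (hn : 2 ≤ n)
    {s : ι} (hs : Odd (d s - p)) : ∃ i j l, IsCoprime (d j - d i) (d l - d i) := by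
  obtain ⟨i, hi⟩ := hd 0 (by omega)
  obtain ⟨j, hj⟩ := hd 1 (by omega)
  refine ⟨i, s, j, ?_⟩
  simpa [hi, hj, Int.isCoprime_two_right] using hs

lemma eq_or_eq_of_zpowVec_mem_span_pair {p : ℤ} (hd : ContainsULA d p 2 3) {s : ι}
    (hs : Odd (d s - p)) {u v w : Fˣ}
    (hw : zpowVec d w ∈ Submodule.span F {zpowVec d u, zpowVec d v}) : w = u ∨ w = v := by
  obtain ⟨i, j, l, hcop⟩ := hd.exists_isCoprime_sub (by norm_num) hs
  have eq_of_mem {y z : Fˣ} (h : zpowVec d y ∈ Submodule.span F {zpowVec d z}) : y = z := by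
    obtain ⟨a, ha⟩ := Submodule.mem_span_singleton.1 h
    exact eq_of_smul_zpowVec_eq hcop ha
  by_contra! hne
  obtain ⟨hwu, hwv⟩ := hne
  have huv : u ≠ v := by
    rintro rfl
    exact hwu (eq_of_mem (by simpa using hw))
  have hu : zpowVec d u ∈ Submodule.span F {zpowVec d w, zpowVec d v} :=
    mem_span_insert_exchange hw (mt eq_of_mem hwv)
  have hv : zpowVec d v ∈ Submodule.span F {zpowVec d w, zpowVec d u} :=
    mem_span_insert_exchange (Set.pair_comm _ _ ▸ hw) (mt eq_of_mem hwu)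
  have hsq_w := sq_eq_or_sq_eq_of_zpowVec_mem_span_pair hd hw
  have hsq_u := sq_eq_or_sq_eq_of_zpowVec_mem_span_pair hd hu
  have hsq_v := sq_eq_or_sq_eq_of_zpowVec_mem_span_pair hd hv
  have hwu_sq : w ^ 2 = u ^ 2 := hsq_w.elim id fun h => hsq_u.elim Eq.symm (h.trans ·.symm)
  have hvu_sq : v ^ 2 = u ^ 2 := hsq_v.elim (·.trans hwu_sq) id
  have hw_neg : w = -u := (Units.eq_or_eq_neg_of_sq_eq_sq _ _ hwu_sq).resolve_left hwu
  have hv_neg : v = -u := (Units.eq_or_eq_neg_of_sq_eq_sq _ _ hvu_sq).resolve_left huv.symm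
  exact hwv (hw_neg.trans hv_neg.symm)

end PowerVectors

/-- The phase `exp (i π sin θ)` between adjacent sensors at half-wavelength spacing, as a unit of
`ℂ`. -/
noncomputable def phase (θ : ℝ) : ℂˣ :=
  Circle.toUnits (Circle.exp (Real.pi * Real.sin θ))

lemma steer_eq_zpowVec_phase {N : ℕ} (d : Fin N → ℤ) (θ : ℝ) :
    steer d θ = zpowVec d (phase θ) := by
  ext n
  simp only [steer, zpowVec, phase, Units.val_zpow_eq_zpow_val, Circle.toUnits_apply,
    Units.val_mk0, Circle.coe_exp, ← Complex.exp_int_mul]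
  push_cast
  ring_nf

lemma injOn_phase : Set.InjOn phase angleDomain := by
  have hmaps : Set.MapsTo (fun θ => Real.pi * Real.sin θ) angleDomain
      (Set.Ico (-Real.pi) Real.pi) := by
    intro θ hθ
    have hlt : Real.sin θ < 1 := by
      simpa using Real.sin_lt_sin_of_lt_of_le_pi_div_two hθ.1 le_rfl hθ.2
    constructor <;> nlinarith [Real.pi_pos, Real.neg_one_le_sin θ]
  have hsin : Set.InjOn (fun θ => Real.pi * Real.sin θ) angleDomain :=
    fun a ha b hb h => Real.injOn_sin (Set.Ico_subset_Icc_self ha) (Set.Ico_subset_Icc_self hb)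
      (mul_left_cancel₀ Real.pi_ne_zero h)
  have hexp : Set.InjOn Circle.exp (Set.Ico (-Real.pi) Real.pi) :=
    Circle.exp_injOn_Ico (by linarith)
  intro a ha b hb h
  exact hexp.comp hsin hmaps ha hb (Circle.ext (congrArg Units.val h))

lemma manifold_col {N K : ℕ} (d : Fin N → ℤ) (θ : Fin K → ℝ) :
    (manifold d θ).col = fun k => zpowVec d (phase (θ k)) :=
  funext fun k => steer_eq_zpowVec_phase d (θ k)

lemma linearIndependent_manifold_col {N : ℕ} {d : Fin N → ℤ} {i j l : Fin N}
    (hd : IsCoprime (d j - d i) (d l - d i)) {θ : Fin 2 → ℝ} (hθ : ∀ k, θ k ∈ angleDomain)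
    (hinj : Function.Injective θ) : LinearIndependent ℂ (manifold d θ).col := by
  have hphase : Function.Injective fun k => phase (θ k) :=
    fun k k' h => hinj (injOn_phase (hθ k) (hθ k') h)
  rw [manifold_col]
  exact linearIndependent_zpowVec_pair hd hphase

lemma steer_mem_colSpace_manifold_iff {N : ℕ} {d : Fin N → ℤ} {p : ℤ} {s : Fin N}
    (hd : ContainsULA d p 2 3) (hs : Odd (d s - p)) {θ : Fin 2 → ℝ}
    (hθ : ∀ k, θ k ∈ angleDomain) {φ : ℝ} (hφ : φ ∈ angleDomain) :
    steer d φ ∈ colSpace (manifold d θ) ↔ ∃ k, θ k = φ := by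
  have hcols : Set.range (manifold d θ).col =
      {zpowVec d (phase (θ 0)), zpowVec d (phase (θ 1))} := by
    ext v
    simp [manifold_col, Fin.exists_fin_two, eq_comm]
  rw [colSpace, range_mulVecLin, hcols, steer_eq_zpowVec_phase]
  constructor
  · intro h
    rcases eq_or_eq_of_zpowVec_mem_span_pair hd hs h with h | h
    · exact ⟨0, injOn_phase (hθ 0) hφ h.symm⟩
    · exact ⟨1, injOn_phase (hθ 1) hφ h.symm⟩
  · rintro ⟨k, rfl⟩
    refine Submodule.subset_span (hcols ▸ ⟨k, ?_⟩)
    rw [manifold_col]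

theorem stmt_12_general {M N : ℕ} {b : Fin M → ℤ} {p : ℤ} {s : Fin M}
    (hb : ContainsULA b p 2 3) (hs : Odd (b s - p)) {c : Fin N → ℤ} {i j l : Fin N}
    (hc : IsCoprime (c j - c i) (c l - c i)) {θ : Fin 2 → ℝ}
    (hθ : ∀ k, θ k ∈ angleDomain) (hinj : Function.Injective θ) {x : Fin 2 → ℂ}
    (hx : ∀ k, x k ≠ 0) :
    (manifold b θ * diagonal x * (manifold c θ)ᵀ).rank = 2 ∧
      ∀ φ ∈ angleDomain,
        (steer b φ ∈ colSpace (manifold b θ * diagonal x * (manifold c θ)ᵀ) ↔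
          ∃ k, θ k = φ) := by
  obtain ⟨i', j', l', hcop⟩ := hb.exists_isCoprime_sub (by norm_num) hs
  have hB : LinearIndependent ℂ (manifold b θ).col := linearIndependent_manifold_col hcop hθ hinj
  have hC : LinearIndependent ℂ (manifold c θ).col := linearIndependent_manifold_col hc hθ hinj
  refine ⟨rank_mul_diagonal_mul_transpose hB hx hC, fun φ hφ => ?_⟩
  rw [colSpace, range_mulVecLin_mul_diagonal_mul_transpose _ hx hC]
  exact steer_mem_colSpace_manifold_iff hb hs hθ hφ

/-- For `S_b = {0, 3, 5, 7}` and `S_c = {0, 4, 9}`, spatial smoothing identifies `K = 2`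
targets: for any two distinct DOAs in `[-π/2, π/2)` and nonzero amplitudes, the spatially
smoothed matrix `Y` has rank `2` and its column space contains `a_{S_b}(φ)` exactly for
`φ ∈ {θ₁, θ₂}`. Moreover, neither sub-array contains a ULA segment with unit spacing
(no two elements differ by one). -/
theorem stmt_12 :
    (∀ θ : Fin 2 → ℝ, (∀ k, θ k ∈ angleDomain) → Function.Injective θ →
      ∀ x : Fin 2 → ℂ, (∀ k, x k ≠ 0) →
      (manifold ![(0 : ℤ), 3, 5, 7] θ * Matrix.diagonal x *
          (manifold ![(0 : ℤ), 4, 9] θ)ᵀ).rank = 2 ∧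
      ∀ φ ∈ angleDomain,
        (steer ![(0 : ℤ), 3, 5, 7] φ ∈
            colSpace (manifold ![(0 : ℤ), 3, 5, 7] θ * Matrix.diagonal x *
              (manifold ![(0 : ℤ), 4, 9] θ)ᵀ) ↔ ∃ k, θ k = φ)) ∧
    (¬ ∃ a : ℤ, a ∈ ({0, 3, 5, 7} : Set ℤ) ∧ a + 1 ∈ ({0, 3, 5, 7} : Set ℤ)) ∧
    (¬ ∃ a : ℤ, a ∈ ({0, 4, 9} : Set ℤ) ∧ a + 1 ∈ ({0, 4, 9} : Set ℤ)) := by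
  have hb : ContainsULA ![(0 : ℤ), 3, 5, 7] 3 2 3 := by unfold ContainsULA; decide
  have hc : IsCoprime (4 - 0 : ℤ) (9 - 0) := by norm_num
  refine ⟨fun θ hθ hinj x hx => ?_, by simp, by simp⟩
  exact stmt_12_general (s := 0) (i := 0) (j := 1) (l := 2) hb (by decide) hc hθ hinj hx
end

section
/- Let S_b = {0, 1, 3, 4}. Then condition (a) fails for K = 2: there exist 3 distinct angles φ_1, φ_2, φ_3 ∈ [-π/2, π/2) such that the 4×3 manifold matrix A_{S_b}(φ) with entries exp(iπ d sin φ_k), d ∈ {0, 1, 3, 4}, has rank at most 2. -/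
open Matrix

/-!
If `q * sin θ` is an even integer, then `exp (i π d sin θ)` depends only on `d` modulo `q`. For
`q ≥ 1` there are exactly `q` such angles in `[-π/2, π/2)`, and at these angles sensors with
congruent positions give equal rows of the manifold matrix. For `{0, 1, 3, 4}` and `q = 3` only two
residues occur.
-/

theorem rank_le_card_image_of_factorsThrough {m n α R : Type*} [Fintype m] [Fintype n]
    [DecidableEq α] [CommSemiring R] [StrongRankCondition R] {M : Matrix m n R} {f : m → α}
    (h : M.row.FactorsThrough f) : M.rank ≤ (Finset.univ.image f).card := by
  let rowAt : Matrix (Finset.univ.image f) n R := Matrix.of fun a => Function.extend f M.row 0 a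
  let label (i : m) : Finset.univ.image f := ⟨f i, Finset.mem_image_of_mem f (Finset.mem_univ i)⟩
  have M_eq_submatrix : M = rowAt.submatrix label id := by
    ext i j
    exact (congrFun (h.extend_apply 0 i) j).symm
  calc M.rank = (rowAt.submatrix label id).rank := congrArg Matrix.rank M_eq_submatrix
    _ ≤ rowAt.rank := rank_submatrix_le rowAt label id
    _ ≤ Fintype.card (Finset.univ.image f) := rank_le_card_height rowAt
    _ = (Finset.univ.image f).card := Fintype.card_coe _

section Periodic

variable {N : ℕ} {d : Fin N → ℤ} {q : ℤ}

theorem steer_apply_eq_of_modEq {θ : ℝ} {l : ℤ} (hθ : q * Real.sin θ = 2 * l) {m n : Fin N}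
    (h : d m ≡ d n [ZMOD q]) : steer d θ m = steer d θ n := by
  obtain ⟨c, hc⟩ := h.symm.dvd
  have hc' : (d m : ℂ) - d n = q * c := by exact_mod_cast hc
  have hθ' : (q : ℂ) * (Real.sin θ : ℂ) = 2 * l := by exact_mod_cast hθ
  refine Complex.exp_eq_exp_iff_exists_int.mpr ⟨l * c, ?_⟩
  rw [Int.cast_mul]
  linear_combination Complex.I * Real.pi * Real.sin θ * hc' + Complex.I * Real.pi * c * hθ'

theorem rank_manifold_le_card_residues {K : ℕ} {φ : Fin K → ℝ}
    (hφ : ∀ k, ∃ l : ℤ, q * Real.sin (φ k) = 2 * l) :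
    (manifold d φ).rank ≤ (Finset.univ.image fun n => d n % q).card := by
  refine rank_le_card_image_of_factorsThrough fun m n hmn => funext fun k => ?_
  obtain ⟨l, hl⟩ := hφ k
  exact steer_apply_eq_of_modEq hl hmn

end Periodic

/-- The `q` numbers of the form `2 * l / q` with `l` an integer that lie in `[-1, 1)`, in increasing
order: the sines of the angles at which steering vectors are `q`-periodic in the sensor position.
The division `q / 2` is integer division. -/
noncomputable def periodicSine (q : ℕ) (i : Fin q) : ℝ :=
  2 * ((i - q / 2 : ℤ) : ℝ) / q

theorem natCast_mul_periodicSine {q : ℕ} (i : Fin q) :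
    q * periodicSine q i = 2 * ((i - q / 2 : ℤ) : ℝ) :=
  mul_div_cancel₀ _ (Nat.cast_ne_zero.mpr i.pos.ne')

theorem periodicSine_mem_Ico {q : ℕ} (i : Fin q) : periodicSine q i ∈ Set.Ico (-1) 1 := by
  have hq : (0 : ℝ) < q := Nat.cast_pos.mpr i.pos
  have lower : -(q : ℤ) ≤ 2 * (i - q / 2) := by omega
  have upper : 2 * (i - q / 2 : ℤ) < q := by omega
  rw [periodicSine, Set.mem_Ico, le_div_iff₀ hq, div_lt_one hq, neg_one_mul]
  exact ⟨by exact_mod_cast lower, by exact_mod_cast upper⟩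

theorem periodicSine_injective (q : ℕ) : Function.Injective (periodicSine q) := by
  intro i j hij
  have h : 2 * ((i - q / 2 : ℤ) : ℝ) = 2 * ((j - q / 2 : ℤ) : ℝ) := by
    rw [← natCast_mul_periodicSine, ← natCast_mul_periodicSine, hij]
  have h' : 2 * (i - q / 2 : ℤ) = 2 * (j - q / 2) := by exact_mod_cast h
  omega

theorem arcsin_mem_angleDomain {x : ℝ} (hx : x < 1) : Real.arcsin x ∈ angleDomain :=
  ⟨Real.neg_pi_div_two_le_arcsin x, Real.arcsin_lt_pi_div_two.mpr hx⟩

theorem stmt_13_general {N : ℕ} (d : Fin N → ℤ) (q : ℕ) :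
    ∃ φ : Fin q → ℝ, (∀ i, φ i ∈ angleDomain) ∧ Function.Injective φ ∧
      (manifold d φ).rank ≤ (Finset.univ.image fun n => d n % q).card := by
  refine ⟨fun i => Real.arcsin (periodicSine q i),
    fun i => arcsin_mem_angleDomain (periodicSine_mem_Ico i).2, fun i j hij => ?_,
    rank_manifold_le_card_residues fun i => ⟨i - q / 2, ?_⟩⟩
  · exact periodicSine_injective q (Real.injOn_arcsin
      (Set.Ico_subset_Icc_self (periodicSine_mem_Ico i))
      (Set.Ico_subset_Icc_self (periodicSine_mem_Ico j)) hij)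
  · rw [Real.sin_arcsin (periodicSine_mem_Ico i).1 (periodicSine_mem_Ico i).2.le]
    exact natCast_mul_periodicSine i

/-- For `S_b = {0, 1, 3, 4}`, condition (a) fails for `K = 2`: there exist three distinct
angles in `[-π/2, π/2)` for which the `4 × 3` manifold matrix has rank at most `2`. -/
theorem stmt_13 :
    ∃ φ : Fin 3 → ℝ, (∀ i, φ i ∈ angleDomain) ∧ Function.Injective φ ∧
      (manifold ![(0 : ℤ), 1, 3, 4] φ).rank ≤ 2 := by
  have card_residues : (Finset.univ.image fun n => ![(0 : ℤ), 1, 3, 4] n % (3 : ℕ)).card = 2 := by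
    decide
  exact card_residues ▸ stmt_13_general ![0, 1, 3, 4] 3
end
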